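/- Low–mid–high frequency splitting: let g : [0,∞) → [1,∞) be non-decreasing and u a Schwartz function on ℝ² with u, Λ^{r₁}u ∈ L² for some r₁ > 2. Then for every integer N ≥ 1, ‖∇u‖_{L^∞(ℝ²)} ≤ C‖u‖_{L²} + C g²(2^N) √N ‖(Λ²/g²(Λ)) u‖_{L²} + C 2^{N(2−r₁)} ‖Λ^{r₁} u‖_{L²}, with C independent of N, u, g. -/

import Mathlib

open MeasureTheory FourierTransform

/-- The fractional Laplacian `Λ^s` on `ℝ²` (Fourier multiplier `|ξ|^s`). -/
noncomputable def fLap (s : ℝ) (f : EuclideanSpace ℝ (Fin 2) → ℂ) :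
    EuclideanSpace ℝ (Fin 2) → ℂ :=
  𝓕⁻ (fun ξ => ((‖ξ‖ ^ s : ℝ) : ℂ) * 𝓕 f ξ)

/-- The Fourier multiplier `Λ²/g²(Λ)` with symbol `|ξ|²/g(|ξ|)²`. -/
noncomputable def gMultSq (g : ℝ → ℝ) (f : EuclideanSpace ℝ (Fin 2) → ℂ) :
    EuclideanSpace ℝ (Fin 2) → ℂ :=
  𝓕⁻ (fun ξ => ((‖ξ‖ ^ (2:ℝ) / (g ‖ξ‖) ^ 2 : ℝ) : ℂ) * 𝓕 f ξ)

/-!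
By Fourier inversion `‖∇u‖_∞ ≤ 2π ∫ |ξ| |û(ξ)| dξ`. Split the integral at `|ξ| = 1` and `|ξ| = 2^N`
and apply Cauchy–Schwarz and Plancherel on each band. In polar coordinates, and in dimension `d`,
the weight of the middle band is `∫_{1 < |ξ| ≤ 2^N} |ξ|^{-d} dξ`, proportional to `log 2^N`: its
square root is the factor `√N`, while `g(|ξ|) ≤ g(2^N)` there. On the exterior band the weight
`|ξ|^{2(1-r)}` is integrable exactly when `r > d/2 + 1`, and its integral decays like
`2^{N(d+2-2r)}`.
-/

open Set Module Metric SchwartzMap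

section RadialIntegrals

variable {E : Type*} [NormedAddCommGroup E] [NormedSpace ℝ E] [FiniteDimensional ℝ E]
  [Nontrivial E] [MeasurableSpace E] [BorelSpace E] (μ : Measure E) [μ.IsAddHaarMeasure]

lemma setLIntegral_norm_rpow {I : Set ℝ} (hI : MeasurableSet I) (hI0 : I ⊆ Ioi 0) {p : ℝ}
    (hp : IntegrableOn (fun y : ℝ => y ^ (finrank ℝ E - 1 + p)) I) :
    ∫⁻ x in norm ⁻¹' I, ENNReal.ofReal (‖x‖ ^ p) ∂μ
      = ENNReal.ofReal (finrank ℝ E * μ.real (ball 0 1) *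
          ∫ y in I, y ^ (finrank ℝ E - 1 + p)) := by
  have radial_density : EqOn (fun y : ℝ => y ^ (finrank ℝ E - 1) • I.indicator (· ^ p) y)
      (I.indicator fun y => y ^ (finrank ℝ E - 1 + p)) (Ioi 0) := fun y (hy : 0 < y) => by
    by_cases hyI : y ∈ I
    · simp only [indicator_of_mem hyI, smul_eq_mul]
      rw [← Real.rpow_natCast, ← Real.rpow_add hy, Nat.cast_pred finrank_pos]
    · simp [hyI]
  have hint : Integrable (fun x : E => I.indicator (· ^ p) ‖x‖) μ := by
    rw [integrable_fun_norm_addHaar μ, integrableOn_congr_fun radial_density measurableSet_Ioi]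
    exact ((integrable_indicator_iff hI).2 hp).integrableOn
  have hnonneg (x : E) : 0 ≤ I.indicator (· ^ p) ‖x‖ :=
    indicator_apply_nonneg fun _ => by positivity
  calc ∫⁻ x in norm ⁻¹' I, ENNReal.ofReal (‖x‖ ^ p) ∂μ
      = ∫⁻ x, ENNReal.ofReal (I.indicator (· ^ p) ‖x‖) ∂μ := by
        rw [← lintegral_indicator (measurable_norm hI)]
        congr with x
        by_cases hx : ‖x‖ ∈ I <;> simp [hx]
    _ = ENNReal.ofReal (∫ x, I.indicator (· ^ p) ‖x‖ ∂μ) :=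
        (ofReal_integral_eq_lintegral_ofReal hint (.of_forall hnonneg)).symm
    _ = _ := by
        rw [integral_fun_norm_addHaar μ, setIntegral_congr_fun measurableSet_Ioi radial_density,
          setIntegral_indicator hI, inter_eq_right.2 hI0, nsmul_eq_mul, smul_eq_mul, mul_assoc]

lemma eLpNorm_two_norm_rpow_restrict {I : Set ℝ} (hI : MeasurableSet I) (hI0 : I ⊆ Ioi 0)
    {p : ℝ} (hp : IntegrableOn (fun y : ℝ => y ^ (finrank ℝ E - 1 + 2 * p)) I) :
    eLpNorm (fun x : E => ‖x‖ ^ p) 2 (μ.restrict (norm ⁻¹' I))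
      = ENNReal.ofReal √(finrank ℝ E * μ.real (ball 0 1) *
          ∫ y in I, y ^ (finrank ℝ E - 1 + 2 * p)) := by
  have sq_enorm (x : E) : ‖‖x‖ ^ p‖ₑ ^ (2 : ℝ) = ENNReal.ofReal (‖x‖ ^ (2 * p)) := by
    rw [Real.enorm_of_nonneg (by positivity),
      ENNReal.ofReal_rpow_of_nonneg (by positivity) zero_le_two, ← Real.rpow_mul (norm_nonneg x),
      mul_comm]
  rw [eLpNorm_eq_lintegral_rpow_enorm_toReal two_ne_zero ENNReal.ofNat_ne_top]
  simp only [ENNReal.toReal_ofNat, sq_enorm]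
  rw [setLIntegral_norm_rpow μ hI hI0 hp, Real.sqrt_eq_rpow,
    ENNReal.ofReal_rpow_of_nonneg _ (by positivity)]
  exact mul_nonneg (by positivity)
    (setIntegral_nonneg hI fun y hy => Real.rpow_nonneg (hI0 hy).le _)

lemma eLpNorm_two_norm_rpow_restrict_shell {R : ℝ} (hR : 1 ≤ R) :
    eLpNorm (fun x : E => ‖x‖ ^ (-(finrank ℝ E / 2) : ℝ)) 2 (μ.restrict (norm ⁻¹' Ioc 1 R))
      = ENNReal.ofReal √(finrank ℝ E * μ.real (ball 0 1) * Real.log R) := by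
  have exponent : (finrank ℝ E - 1 + 2 * -(finrank ℝ E / 2) : ℝ) = -1 := by ring
  rw [eLpNorm_two_norm_rpow_restrict μ measurableSet_Ioc fun y hy => zero_lt_one.trans hy.1] <;>
    simp only [exponent, Real.rpow_neg_one]
  · rw [← intervalIntegral.integral_of_le hR,
      integral_inv_of_pos zero_lt_one (zero_lt_one.trans_le hR), div_one]
  · rw [← intervalIntegrable_iff_integrableOn_Ioc_of_le hR]
    refine intervalIntegral.intervalIntegrable_inv (fun y hy => ?_) continuousOn_id
    exact (zero_lt_one.trans_le (uIcc_of_le hR ▸ hy).1).ne'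

lemma eLpNorm_two_norm_rpow_restrict_exterior {R p : ℝ} (hR : 0 < R)
    (hp : finrank ℝ E / 2 + p < 0) :
    eLpNorm (fun x : E => ‖x‖ ^ p) 2 (μ.restrict (norm ⁻¹' Ioi R))
      = ENNReal.ofReal (√(finrank ℝ E * μ.real (ball 0 1) / -(finrank ℝ E + 2 * p)) *
          R ^ (finrank ℝ E / 2 + p)) := by
  have hlt : finrank ℝ E - 1 + 2 * p < -1 := by linarith
  rw [eLpNorm_two_norm_rpow_restrict μ measurableSet_Ioi (Ioi_subset_Ioi hR.le)
    (integrableOn_Ioi_rpow_of_lt hlt hR), integral_Ioi_rpow_of_lt hlt hR]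
  have tail : finrank ℝ E * μ.real (ball 0 1) *
      (-R ^ (finrank ℝ E - 1 + 2 * p + 1) / (finrank ℝ E - 1 + 2 * p + 1))
      = finrank ℝ E * μ.real (ball 0 1) / -(finrank ℝ E + 2 * p) *
        (R ^ (finrank ℝ E / 2 + p)) ^ 2 := by
    rw [← Real.rpow_mul_natCast hR.le, neg_div, div_neg]
    ring_nf
  rw [tail, Real.sqrt_mul' _ (sq_nonneg _), Real.sqrt_sq (Real.rpow_nonneg hR.le _)]

end RadialIntegrals

section FrequencyBands

variable {E F : Type*} [NormedAddCommGroup E] [MeasurableSpace E]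
  [NormedAddCommGroup F] {μ : Measure E} {f : E → F}

lemma lintegral_le_closedBall_add_shell_add_exterior (φ : E → ENNReal) (R : ℝ) :
    ∫⁻ x, φ x ∂μ ≤ ∫⁻ x in closedBall 0 1, φ x ∂μ + ∫⁻ x in norm ⁻¹' Ioc 1 R, φ x ∂μ
      + ∫⁻ x in norm ⁻¹' Ioi R, φ x ∂μ := by
  have cover : univ ⊆ closedBall (0 : E) 1 ∪ norm ⁻¹' Ioc 1 R ∪ norm ⁻¹' Ioi R := fun x _ => by
    simp only [mem_union, mem_closedBall_zero_iff, mem_preimage, mem_Ioc, mem_Ioi]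
    grind
  rw [← setLIntegral_univ]
  exact (lintegral_mono_set cover).trans <| (lintegral_union_le _ _ _).trans <|
    add_le_add_left (lintegral_union_le _ _ _) _

lemma setLIntegral_closedBall_norm_mul_le [OpensMeasurableSpace E]
    (hf : AEStronglyMeasurable f μ) :
    ∫⁻ x in closedBall 0 1, ‖x‖ₑ * ‖f x‖ₑ ∂μ
      ≤ μ (closedBall 0 1) ^ (1 / 2 : ℝ) * eLpNorm f 2 μ := by
  have norm_le_one (x : E) (hx : x ∈ closedBall 0 1) : ‖x‖ₑ * ‖f x‖ₑ ≤ ‖f x‖ₑ := by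
    refine mul_le_of_le_one_left' ?_
    simpa [← ofReal_norm] using hx
  calc ∫⁻ x in closedBall 0 1, ‖x‖ₑ * ‖f x‖ₑ ∂μ
      ≤ eLpNorm f 1 (μ.restrict (closedBall 0 1)) := by
        rw [eLpNorm_one_eq_lintegral_enorm]
        exact setLIntegral_mono' measurableSet_closedBall norm_le_one
    _ ≤ eLpNorm f 2 (μ.restrict (closedBall 0 1)) * μ (closedBall 0 1) ^ (1 / 2 : ℝ) := by
        convert! eLpNorm_le_eLpNorm_mul_rpow_measure_univ one_le_two hf.restrict using 2
        norm_num
    _ ≤ μ (closedBall 0 1) ^ (1 / 2 : ℝ) * eLpNorm f 2 μ := by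
        rw [mul_comm]
        gcongr
        exact Measure.restrict_le_self

variable [NormedSpace ℝ F]

lemma eLpNorm_norm_rpow_smul_le_of_monotoneOn {g : ℝ → ℝ} (hg : MonotoneOn g (Ici 0))
    (hg0 : ∀ t, 0 ≤ t → 0 < g t) {S : Set E} (hS : MeasurableSet S) {R : ℝ}
    (hSR : ∀ x ∈ S, ‖x‖ ≤ R) (s : ℝ) :
    eLpNorm (fun x => ‖x‖ ^ s • f x) 2 (μ.restrict S)
      ≤ ENNReal.ofReal (g R ^ 2) * eLpNorm (fun x => (‖x‖ ^ s / g ‖x‖ ^ 2) • f x) 2 μ := by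
  have pointwise (x : E) (hx : x ∈ S) :
      ‖‖x‖ ^ s • f x‖ ≤ g R ^ 2 * ‖(‖x‖ ^ s / g ‖x‖ ^ 2) • f x‖ := by
    have gx_pos := hg0 ‖x‖ (norm_nonneg x)
    have gx_le : g ‖x‖ ≤ g R := hg (norm_nonneg x) ((norm_nonneg x).trans (hSR x hx)) (hSR x hx)
    rw [norm_smul, norm_smul, Real.norm_of_nonneg (by positivity),
      Real.norm_of_nonneg (by positivity), ← mul_assoc, mul_div_left_comm]
    gcongr
    refine le_mul_of_one_le_right (by positivity) ?_
    rw [one_le_div (by positivity)]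
    gcongr
  calc eLpNorm (fun x => ‖x‖ ^ s • f x) 2 (μ.restrict S)
      ≤ ENNReal.ofReal (g R ^ 2) *
          eLpNorm (fun x => (‖x‖ ^ s / g ‖x‖ ^ 2) • f x) 2 (μ.restrict S) :=
        eLpNorm_le_mul_eLpNorm_of_ae_le_mul
          ((ae_restrict_iff' hS).2 (.of_forall pointwise)) 2
    _ ≤ _ := by
        gcongr
        exact Measure.restrict_le_self

lemma lintegral_norm_mul_le_eLpNorm_mul_eLpNorm [OpensMeasurableSpace E]
    (hf : AEStronglyMeasurable f μ) (s : ℝ) :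
    ∫⁻ x, ‖x‖ₑ * ‖f x‖ₑ ∂μ
      ≤ eLpNorm (fun x => ‖x‖ ^ (1 - s)) 2 μ * eLpNorm (fun x => ‖x‖ ^ s • f x) 2 μ := by
  have norm_le (x : E) : ‖x‖ ≤ ‖x‖ ^ (1 - s) * ‖x‖ ^ s := by
    rcases (norm_nonneg x).eq_or_lt' with hx | hx
    · rw [hx]
      positivity
    · rw [← Real.rpow_add hx, sub_add_cancel, Real.rpow_one]
  calc ∫⁻ x, ‖x‖ₑ * ‖f x‖ₑ ∂μ
      ≤ eLpNorm (fun x => ‖x‖ ^ (1 - s) • (‖x‖ ^ s • f x)) 1 μ := by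
        rw [eLpNorm_one_eq_lintegral_enorm]
        refine lintegral_mono fun x => ?_
        rw [smul_smul, enorm_smul]
        gcongr
        rw [← ofReal_norm, Real.enorm_of_nonneg (by positivity)]
        exact ENNReal.ofReal_le_ofReal (norm_le x)
    _ ≤ _ := eLpNorm_smul_le_mul_eLpNorm
        ((measurable_norm.pow_const s).aestronglyMeasurable.smul hf)
        (measurable_norm.pow_const (1 - s)).aestronglyMeasurable

variable [NormedSpace ℝ E] [FiniteDimensional ℝ E] [Nontrivial E] [BorelSpace E]
  [μ.IsAddHaarMeasure]

lemma setLIntegral_shell_norm_mul_le (hf : AEStronglyMeasurable f μ) {g : ℝ → ℝ}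
    (hg : MonotoneOn g (Ici 0)) (hg0 : ∀ t, 0 ≤ t → 0 < g t) {R : ℝ} (hR : 1 ≤ R) :
    ∫⁻ x in norm ⁻¹' Ioc 1 R, ‖x‖ₑ * ‖f x‖ₑ ∂μ
      ≤ ENNReal.ofReal (√(finrank ℝ E * μ.real (ball 0 1) * Real.log R) * g R ^ 2) *
        eLpNorm (fun x => (‖x‖ ^ (finrank ℝ E / 2 + 1 : ℝ) / g ‖x‖ ^ 2) • f x) 2 μ := by
  refine (lintegral_norm_mul_le_eLpNorm_mul_eLpNorm hf.restrict (finrank ℝ E / 2 + 1)).trans ?_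
  rw [sub_add_cancel_right, eLpNorm_two_norm_rpow_restrict_shell μ hR,
    ENNReal.ofReal_mul (Real.sqrt_nonneg _), mul_assoc (ENNReal.ofReal _)]
  gcongr
  exact eLpNorm_norm_rpow_smul_le_of_monotoneOn (f := f) hg hg0
    (measurable_norm measurableSet_Ioc) (fun _ hx => hx.2) _

lemma setLIntegral_exterior_norm_mul_le (hf : AEStronglyMeasurable f μ) {r R : ℝ}
    (hr : finrank ℝ E / 2 + 1 < r) (hR : 0 < R) :
    ∫⁻ x in norm ⁻¹' Ioi R, ‖x‖ₑ * ‖f x‖ₑ ∂μ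
      ≤ ENNReal.ofReal (√(finrank ℝ E * μ.real (ball 0 1) / (2 * (r - 1) - finrank ℝ E)) *
          R ^ (finrank ℝ E / 2 + 1 - r)) * eLpNorm (fun x => ‖x‖ ^ r • f x) 2 μ := by
  refine (lintegral_norm_mul_le_eLpNorm_mul_eLpNorm hf.restrict r).trans ?_
  rw [eLpNorm_two_norm_rpow_restrict_exterior μ hR (by linarith),
    show -(finrank ℝ E + 2 * (1 - r)) = 2 * (r - 1) - finrank ℝ E by ring, ← add_sub_assoc]
  gcongr
  exact Measure.restrict_le_self

lemma lintegral_norm_mul_le_of_monotoneOn (hf : AEStronglyMeasurable f μ) {g : ℝ → ℝ}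
    (hg : MonotoneOn g (Ici 0)) (hg0 : ∀ t, 0 ≤ t → 0 < g t) {r R : ℝ}
    (hr : finrank ℝ E / 2 + 1 < r) (hR : 1 ≤ R) :
    ∫⁻ x, ‖x‖ₑ * ‖f x‖ₑ ∂μ
      ≤ ENNReal.ofReal √(μ.real (ball 0 1)) * eLpNorm f 2 μ
        + ENNReal.ofReal (√(finrank ℝ E * μ.real (ball 0 1) * Real.log R) * g R ^ 2) *
          eLpNorm (fun x => (‖x‖ ^ (finrank ℝ E / 2 + 1 : ℝ) / g ‖x‖ ^ 2) • f x) 2 μ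
        + ENNReal.ofReal (√(finrank ℝ E * μ.real (ball 0 1) / (2 * (r - 1) - finrank ℝ E)) *
          R ^ (finrank ℝ E / 2 + 1 - r)) * eLpNorm (fun x => ‖x‖ ^ r • f x) 2 μ := by
  have ball_const : μ (closedBall 0 1) ^ (1 / 2 : ℝ) = ENNReal.ofReal √(μ.real (ball 0 1)) := by
    rw [Measure.addHaar_unitClosedBall_eq_addHaar_unitBall, Real.sqrt_eq_rpow,
      ← ENNReal.ofReal_rpow_of_nonneg measureReal_nonneg (by norm_num),
      ofReal_measureReal measure_ball_lt_top.ne]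
  refine (lintegral_le_closedBall_add_shell_add_exterior _ R).trans ?_
  rw [← ball_const]
  exact add_le_add (add_le_add (setLIntegral_closedBall_norm_mul_le hf)
    (setLIntegral_shell_norm_mul_le hf hg hg0 hR))
    (setLIntegral_exterior_norm_mul_le hf hr (zero_lt_one.trans_le hR))

end FrequencyBands

section FourierIntegral

variable {V F : Type*} [NormedAddCommGroup V] [InnerProductSpace ℝ V] [FiniteDimensional ℝ V]
  [MeasurableSpace V] [BorelSpace V] [NormedAddCommGroup F] [NormedSpace ℂ F]

lemma enorm_fourierInv_le (f : V → F) (x : V) : ‖𝓕⁻ f x‖ₑ ≤ ∫⁻ ξ, ‖f ξ‖ₑ := by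
  rw [Real.fourierInv_eq]
  refine (enorm_integral_le_lintegral_enorm _).trans_eq ?_
  simp only [← ofReal_norm, Circle.norm_smul]

lemma continuous_fourierInv {h : V → F} (hh : Integrable h) : Continuous (𝓕⁻ h) := by
  rw [← Real.Lp.fourierTransformInv_toLp (memLp_one_iff_integrable.2 hh)]
  exact BoundedContinuousFunction.continuous _

variable [CompleteSpace F]

lemma enorm_fderiv_le_lintegral_norm_mul_fourier (f : 𝓢(V, F)) (x : V) :
    ‖fderiv ℝ f x‖ₑ ≤ ENNReal.ofReal (2 * Real.pi) * ∫⁻ ξ, ‖ξ‖ₑ * ‖𝓕 (f : V → F) ξ‖ₑ := by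
  have norm_fourier_fderiv (ξ : V) :
      ‖𝓕 (SchwartzMap.fderivCLM ℂ V F f) ξ‖ = 2 * Real.pi * (‖ξ‖ * ‖𝓕 (f : V → F) ξ‖) := by
    rw [SchwartzMap.fourier_fderivCLM_eq, smul_apply, norm_smul,
      SchwartzMap.smulRightCLM_apply_apply, ContinuousLinearMap.norm_smulRight_apply,
      innerSL_apply_norm]
    simp [SchwartzMap.fourier_coe, abs_of_pos Real.pi_pos]
  have inversion : 𝓕⁻ (𝓕 (SchwartzMap.fderivCLM ℂ V F f)) = SchwartzMap.fderivCLM ℂ V F f :=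
    FourierTransform.fourierInv_fourier_eq _
  rw [← SchwartzMap.fderivCLM_apply ℂ, ← inversion, SchwartzMap.fourierInv_coe]
  refine (enorm_fourierInv_le _ x).trans_eq ?_
  simp only [← ofReal_norm, norm_fourier_fderiv,
    ENNReal.ofReal_mul Real.two_pi_pos.le, ENNReal.ofReal_mul (norm_nonneg _)]
  exact lintegral_const_mul' _ _ ENNReal.ofReal_ne_top

lemma integral_fourierInv_smul_eq_integral_smul_fourierInv {f : V → ℂ} {h : V → F}
    (hf : Integrable f) (hh : Integrable h) :
    ∫ ξ, 𝓕⁻ f ξ • h ξ = ∫ x, f x • 𝓕⁻ h x := by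
  have flip_eq : (-innerₗ V).flip = -innerₗ V := by
    ext x y
    simp [real_inner_comm]
  have flip_duality := VectorFourier.integral_fourierIntegral_smul_eq_flip
    (μ := volume) (ν := volume) (L := -innerₗ V) Real.continuous_fourierChar
    (by simp only [LinearMap.neg_apply, innerₗ_apply_apply]; fun_prop) hf hh
  rwa [flip_eq] at flip_duality

lemma ae_eq_of_integral_schwartzMap_smul_eq {E : Type*} [NormedAddCommGroup E]
    [NormedSpace ℝ E] [FiniteDimensional ℝ E] [MeasurableSpace E] [BorelSpace E] {μ : Measure E}
    {f h : E → F} (hf : LocallyIntegrable f μ) (hh : LocallyIntegrable h μ)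
    (hfh : ∀ φ : 𝓢(E, ℂ), ∫ x, φ x • f x ∂μ = ∫ x, φ x • h x ∂μ) :
    f =ᵐ[μ] h := by
  refine ae_eq_of_integral_contDiff_smul_eq hf hh fun φ φ_smooth φ_compact => ?_
  have ofReal_φ_compact : HasCompactSupport (Complex.ofRealCLM ∘ φ) := φ_compact.comp_left rfl
  simpa using hfh (ofReal_φ_compact.toSchwartzMap (Complex.ofRealCLM.contDiff.comp φ_smooth))

end FourierIntegral

section Plancherel

variable {V F : Type*} [NormedAddCommGroup V] [InnerProductSpace ℝ V] [FiniteDimensional ℝ V]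
  [MeasurableSpace V] [BorelSpace V] [NormedAddCommGroup F] [InnerProductSpace ℂ F]
  [CompleteSpace F]

lemma coeFn_fourierInv_toLp {h : V → F} (h1 : Integrable h) (h2 : MemLp h 2) :
    (𝓕⁻ (h2.toLp h) : Lp F 2 (volume : Measure V)) =ᵐ[volume] 𝓕⁻ h := by
  refine ae_eq_of_integral_schwartzMap_smul_eq ((Lp.memLp _).locallyIntegrable one_le_two)
    (continuous_fourierInv h1).locallyIntegrable fun φ => ?_
  calc ∫ x, φ x • (𝓕⁻ (h2.toLp h) : Lp F 2 (volume : Measure V)) x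
      = ∫ ξ, 𝓕⁻ φ ξ • h2.toLp h ξ := by
        rw [← Lp.toTemperedDistribution_apply, ← Lp.fourierInv_toTemperedDistribution_eq,
          TemperedDistribution.fourierInv_apply, Lp.toTemperedDistribution_apply]
    _ = ∫ ξ, 𝓕⁻ φ ξ • h ξ := by
        refine integral_congr_ae ?_
        filter_upwards [h2.coeFn_toLp] with ξ hξ
        rw [hξ]
    _ = ∫ x, φ x • 𝓕⁻ h x := by
        rw [SchwartzMap.fourierInv_coe,
          integral_fourierInv_smul_eq_integral_smul_fourierInv φ.integrable h1]

lemma eLpNorm_two_fourierInv {h : V → F} (h1 : Integrable h) (h2 : MemLp h 2) :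
    eLpNorm (𝓕⁻ h) 2 volume = eLpNorm h 2 volume := by
  have isometry : ‖𝓕⁻ (h2.toLp h)‖ = ‖h2.toLp h‖ :=
    (Lp.fourierTransformₗᵢ V F).symm.norm_map (h2.toLp h)
  rw [← eLpNorm_congr_ae (coeFn_fourierInv_toLp h1 h2), ← Lp.enorm_def, ← ofReal_norm, isometry,
    ofReal_norm, Lp.enorm_toLp]

lemma eLpNorm_two_fourier (f : 𝓢(V, F)) :
    eLpNorm (𝓕 (f : V → F)) 2 volume = eLpNorm f 2 volume := by
  rw [← SchwartzMap.fourier_coe, ← eLpNorm_two_fourierInv (𝓕 f).integrable ((𝓕 f).memLp 2),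
    ← SchwartzMap.fourierInv_coe, FourierTransform.fourierInv_fourier_eq]

end Plancherel

section FourierMultiplier

variable {V F : Type*} [NormedAddCommGroup V] [InnerProductSpace ℝ V] [FiniteDimensional ℝ V]
  [MeasurableSpace V] [BorelSpace V] [NormedAddCommGroup F] [NormedSpace ℂ F]

/-- The Fourier multiplier `m(D) f = 𝓕⁻ (m 𝓕 f)` with real symbol `m`, defined through the Fourier
integrals so that non-smooth symbols such as `‖ξ‖ ^ s` are allowed. It unifies `fLap` and
`gMultSq`. -/
noncomputable def fourierMultiplier (m : V → ℝ) (f : V → F) : V → F :=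
  𝓕⁻ (fun ξ => m ξ • 𝓕 f ξ)

lemma fLap_eq_fourierMultiplier (s : ℝ) (f : EuclideanSpace ℝ (Fin 2) → ℂ) :
    fLap s f = fourierMultiplier (fun ξ => ‖ξ‖ ^ s) f := rfl

lemma gMultSq_eq_fourierMultiplier (g : ℝ → ℝ) (f : EuclideanSpace ℝ (Fin 2) → ℂ) :
    gMultSq g f = fourierMultiplier (fun ξ => ‖ξ‖ ^ (2 : ℝ) / g ‖ξ‖ ^ 2) f := rfl

lemma memLp_smul_schwartzMap {m w : V → ℝ} (hm : AEStronglyMeasurable m)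
    (hw : w.HasTemperateGrowth) (hmw : ∀ ξ, ‖m ξ‖ ≤ ‖w ξ‖) (f : 𝓢(V, F)) (p : ENNReal) :
    MemLp (fun ξ => m ξ • f ξ) p := by
  have norm_le (ξ : V) : ‖m ξ • f ξ‖ ≤ ‖SchwartzMap.smulLeftCLM F w f ξ‖ := by
    rw [SchwartzMap.smulLeftCLM_apply_apply hw, norm_smul, norm_smul]
    gcongr
    exact hmw ξ
  exact ((SchwartzMap.smulLeftCLM F w f).memLp p).mono
    (hm.smul f.continuous.aestronglyMeasurable) (.of_forall norm_le)

end FourierMultiplier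

lemma norm_rpow_le_one_add_sq_rpow {G : Type*} [SeminormedAddGroup G] (x : G) {s : ℝ}
    (hs : 0 ≤ s) : ‖x‖ ^ s ≤ (1 + ‖x‖ ^ 2) ^ (s / 2) := by
  calc ‖x‖ ^ s = (‖x‖ ^ 2) ^ (s / 2) := by
        rw [← Real.rpow_natCast_mul (norm_nonneg x), Nat.cast_two, mul_div_cancel₀ s two_ne_zero]
    _ ≤ (1 + ‖x‖ ^ 2) ^ (s / 2) := by
        gcongr
        exact le_add_of_nonneg_left zero_le_one

lemma measurable_comp_norm_of_monotoneOn {G : Type*} [NormedAddCommGroup G]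
    [MeasurableSpace G] [OpensMeasurableSpace G] {g : ℝ → ℝ} (hg : MonotoneOn g (Ici 0)) :
    Measurable fun x : G => g ‖x‖ := by
  have monotone_extension : Monotone fun t => g (max t 0) := fun s t hst =>
    hg (le_max_right s 0) (le_max_right t 0) (max_le_max_right 0 hst)
  have eq_extension (x : G) : g ‖x‖ = g (max ‖x‖ 0) := by rw [max_eq_left (norm_nonneg x)]
  simp only [eq_extension]
  exact monotone_extension.measurable.comp measurable_norm

section PlancherelMultiplier

variable {V F : Type*} [NormedAddCommGroup V] [InnerProductSpace ℝ V] [FiniteDimensional ℝ V]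
  [MeasurableSpace V] [BorelSpace V] [NormedAddCommGroup F] [InnerProductSpace ℂ F]
  [CompleteSpace F]

lemma eLpNorm_two_fourierMultiplier {m w : V → ℝ} (hm : AEStronglyMeasurable m)
    (hw : w.HasTemperateGrowth) (hmw : ∀ ξ, ‖m ξ‖ ≤ ‖w ξ‖) (f : 𝓢(V, F)) :
    eLpNorm (fourierMultiplier m f) 2 volume
      = eLpNorm (fun ξ => m ξ • 𝓕 (f : V → F) ξ) 2 volume := by
  rw [fourierMultiplier, ← SchwartzMap.fourier_coe]
  exact eLpNorm_two_fourierInv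
    (memLp_one_iff_integrable.1 (memLp_smul_schwartzMap hm hw hmw (𝓕 f) 1))
    (memLp_smul_schwartzMap hm hw hmw (𝓕 f) 2)

lemma eLpNorm_two_fourierMultiplier_norm_rpow {s : ℝ} (hs : 0 ≤ s) (f : 𝓢(V, F)) :
    eLpNorm (fourierMultiplier (fun ξ => ‖ξ‖ ^ s) f) 2 volume
      = eLpNorm (fun ξ => ‖ξ‖ ^ s • 𝓕 (f : V → F) ξ) 2 volume := by
  refine eLpNorm_two_fourierMultiplier (measurable_norm.pow_const s).aestronglyMeasurable
    (Function.hasTemperateGrowth_one_add_norm_sq_rpow V (s / 2)) (fun ξ => ?_) f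
  rw [Real.norm_of_nonneg (by positivity), Real.norm_of_nonneg (by positivity)]
  exact norm_rpow_le_one_add_sq_rpow ξ hs

lemma eLpNorm_two_fourierMultiplier_norm_rpow_div_sq {s : ℝ} (hs : 0 ≤ s) {g : ℝ → ℝ}
    (hg : MonotoneOn g (Ici 0)) (hg0 : 0 < g 0) (f : 𝓢(V, F)) :
    eLpNorm (fourierMultiplier (fun ξ => ‖ξ‖ ^ s / g ‖ξ‖ ^ 2) f) 2 volume
      = eLpNorm (fun ξ => (‖ξ‖ ^ s / g ‖ξ‖ ^ 2) • 𝓕 (f : V → F) ξ) 2 volume := by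
  have symbol_measurable : Measurable fun ξ : V => ‖ξ‖ ^ s / g ‖ξ‖ ^ 2 :=
    (measurable_norm.pow_const s).div ((measurable_comp_norm_of_monotoneOn hg).pow_const 2)
  have majorant_growth :
      (fun ξ : V => (g 0 ^ 2)⁻¹ * (1 + ‖ξ‖ ^ 2) ^ (s / 2)).HasTemperateGrowth :=
    .mul (.const _) (Function.hasTemperateGrowth_one_add_norm_sq_rpow V (s / 2))
  refine eLpNorm_two_fourierMultiplier symbol_measurable.aestronglyMeasurable majorant_growth
    (fun ξ => ?_) f
  have g_zero_le : g 0 ≤ g ‖ξ‖ := hg self_mem_Ici (norm_nonneg ξ) (norm_nonneg ξ)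
  rw [Real.norm_of_nonneg (by positivity), Real.norm_of_nonneg (by positivity), inv_mul_eq_div]
  gcongr
  exact norm_rpow_le_one_add_sq_rpow ξ hs

end PlancherelMultiplier

section Gradient

variable {V F : Type*} [NormedAddCommGroup V] [InnerProductSpace ℝ V] [FiniteDimensional ℝ V]
  [Nontrivial V] [MeasurableSpace V] [BorelSpace V] [NormedAddCommGroup F]
  [InnerProductSpace ℂ F] [CompleteSpace F]

lemma eLpNorm_top_fderiv_le_of_monotoneOn {g : ℝ → ℝ} (hg : MonotoneOn g (Ici 0))
    (hg0 : ∀ t, 0 ≤ t → 0 < g t) {r R : ℝ} (hr : finrank ℝ V / 2 + 1 < r) (hR : 1 ≤ R)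
    (u : 𝓢(V, F)) :
    eLpNorm (fun x => fderiv ℝ u x) ⊤ volume ≤ ENNReal.ofReal (2 * Real.pi) *
      (ENNReal.ofReal √(volume.real (ball (0 : V) 1)) * eLpNorm u 2 volume
        + ENNReal.ofReal
            (√(finrank ℝ V * volume.real (ball (0 : V) 1) * Real.log R) * g R ^ 2) *
          eLpNorm (fourierMultiplier
            (fun ξ => ‖ξ‖ ^ (finrank ℝ V / 2 + 1 : ℝ) / g ‖ξ‖ ^ 2) u) 2 volume
        + ENNReal.ofReal
            (√(finrank ℝ V * volume.real (ball (0 : V) 1) / (2 * (r - 1) - finrank ℝ V)) *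
              R ^ (finrank ℝ V / 2 + 1 - r)) *
          eLpNorm (fourierMultiplier (fun ξ => ‖ξ‖ ^ r) u) 2 volume) := by
  have hr0 : 0 ≤ r := (by positivity : (0 : ℝ) ≤ finrank ℝ V / 2 + 1).trans hr.le
  refine eLpNormEssSup_le_of_ae_enorm_bound (.of_forall fun x => ?_)
  refine (enorm_fderiv_le_lintegral_norm_mul_fourier u x).trans ?_
  rw [← eLpNorm_two_fourier u, eLpNorm_two_fourierMultiplier_norm_rpow hr0,
    eLpNorm_two_fourierMultiplier_norm_rpow_div_sq (by positivity) hg (hg0 0 le_rfl)]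
  gcongr
  exact lintegral_norm_mul_le_of_monotoneOn (𝓕 u).continuous.aestronglyMeasurable hg hg0 hr hR

theorem frequency_splitting_general (r : ℝ) (hr : finrank ℝ V / 2 + 1 < r) :
    ∃ C : ℝ, 0 < C ∧
      ∀ g : ℝ → ℝ, (∀ τ, 0 ≤ τ → 0 < g τ) → MonotoneOn g (Ici 0) →
      ∀ u : 𝓢(V, F), ∀ N : ℝ, 0 ≤ N →
        eLpNorm (fun x => fderiv ℝ u x) ⊤ volume
          ≤ ENNReal.ofReal C * eLpNorm u 2 volume
            + ENNReal.ofReal (C * g (2 ^ N) ^ 2 * √N) *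
                eLpNorm (fourierMultiplier
                  (fun ξ => ‖ξ‖ ^ (finrank ℝ V / 2 + 1 : ℝ) / g ‖ξ‖ ^ 2) u) 2 volume
            + ENNReal.ofReal (C * 2 ^ (N * (finrank ℝ V / 2 + 1 - r))) *
                eLpNorm (fourierMultiplier (fun ξ => ‖ξ‖ ^ r) u) 2 volume := by
  set ω := volume.real (ball (0 : V) 1)
  have ω_pos : 0 < ω :=
    ENNReal.toReal_pos (measure_ball_pos _ _ zero_lt_one).ne' measure_ball_lt_top.ne
  let shell := √(finrank ℝ V * ω)
  let exterior := √(finrank ℝ V * ω / (2 * (r - 1) - finrank ℝ V))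
  let A := max √ω (max shell exterior)
  have A_pos : 0 < A := lt_max_of_lt_left (Real.sqrt_pos.2 ω_pos)
  refine ⟨2 * Real.pi * A, mul_pos Real.two_pi_pos A_pos, fun g hg0 hg u N hN => ?_⟩
  have shell_le : √(finrank ℝ V * ω * Real.log (2 ^ N)) ≤ A * √N := by
    rw [Real.sqrt_mul (by positivity), Real.log_rpow two_pos]
    gcongr
    · exact (le_max_left shell exterior).trans (le_max_right _ _)
    · exact mul_le_of_le_one_right hN (Real.log_two_lt_d9.le.trans (by norm_num))
  refine (eLpNorm_top_fderiv_le_of_monotoneOn hg hg0 hr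
    (Real.one_le_rpow one_le_two hN) u).trans ?_
  simp only [mul_add, ← mul_assoc, ← ENNReal.ofReal_mul Real.two_pi_pos.le,
    ← Real.rpow_mul zero_le_two]
  gcongr ENNReal.ofReal ?_ * _ + ENNReal.ofReal ?_ * _ + ENNReal.ofReal ?_ * _
  · gcongr
    exact le_max_left _ _
  · calc 2 * Real.pi * √(finrank ℝ V * ω * Real.log (2 ^ N)) * g (2 ^ N) ^ 2
        ≤ 2 * Real.pi * (A * √N) * g (2 ^ N) ^ 2 := by gcongr
      _ = 2 * Real.pi * A * g (2 ^ N) ^ 2 * √N := by ring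
  · gcongr
    exact (le_max_right shell exterior).trans (le_max_right _ _)

end Gradient

/-- **low–mid–high frequency splitting.** For `r₁ > 2` there is `C > 0`,
independent of `N`, `u` and `g`, such that for every non-decreasing `g ≥ 1`, every
Schwartz `u` and every integer `N ≥ 1`,
`‖∇u‖_{L^∞} ≤ C‖u‖_{L²} + C g²(2^N)√N ‖(Λ²/g²(Λ))u‖_{L²} + C 2^{N(2−r₁)}‖Λ^{r₁}u‖_{L²}`. -/
theorem frequency_splitting
    (r₁ : ℝ) (hr₁ : 2 < r₁) :
    ∃ C : ℝ, 0 < C ∧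
      ∀ g : ℝ → ℝ, (∀ τ, 0 ≤ τ → 1 ≤ g τ) → MonotoneOn g (Set.Ici (0:ℝ)) →
      ∀ u : SchwartzMap (EuclideanSpace ℝ (Fin 2)) ℂ,
      ∀ N : ℕ, 1 ≤ N →
        eLpNorm (fun x => fderiv ℝ (⇑u) x) ⊤ volume
          ≤ ENNReal.ofReal C * eLpNorm (⇑u) 2 volume
            + ENNReal.ofReal (C * (g ((2:ℝ) ^ N)) ^ 2 * Real.sqrt N) *
                eLpNorm (gMultSq g u) 2 volume
            + ENNReal.ofReal (C * (2:ℝ) ^ ((N : ℝ) * (2 - r₁))) *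
                eLpNorm (fLap r₁ u) 2 volume := by
  obtain ⟨C, hC, bound⟩ := frequency_splitting_general (V := EuclideanSpace ℝ (Fin 2)) (F := ℂ) r₁
    (by norm_num [hr₁])
  refine ⟨C, hC, fun g hg1 hg u N _ => ?_⟩
  have bound_N := bound g (fun τ hτ => zero_lt_one.trans_le (hg1 τ hτ)) hg u N N.cast_nonneg
  have exponent : ((2 : ℕ) / 2 + 1 : ℝ) = 2 := by norm_num
  rw [finrank_euclideanSpace_fin, exponent, Real.rpow_natCast] at bound_N
  rwa [gMultSq_eq_fourierMultiplier, fLap_eq_fourierMultiplier]
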